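/- Let N ≥ 1 and c, c₀, C, Ω ∈ ℝ. Let L and G be smooth functions on the extended phase space ℝ^{2N+2} depending on (q,p) only with X_L(X_L(G)) = −2(cL + c₀)·G identically, and let γ be a smooth nonvanishing solution of γ' + cγ² + C = 0 on an open interval I. Define the sequence G_1 = G, G_{j+1} = X_L(G)·G_j + (1/j)·G·X_L(G_j). For positive integers s, r define the operator U_{2s,r}(h) = p_u·h + (2s/r²)·γ(u)·X_L(h), the operator V(h) = U_{2s,r}(U_{2s,r}(h)) + 2Ω·γ(u)^{−2}·h, and K̄_{2s,r} = V^s(G_r) (the s-th iterate of V applied to G_r). Let H = (1/2)p_u² − k²γ'(u)·L + k²c₀·γ(u)² + Ω/γ(u)², with k = m/n for positive integers m, n. Then: (i) if m = 2s is even, {H, K̄_{m,n}} = 0 at every point with u ∈ I; (ii) if m is odd, {H, K̄_{2m,2n}} = 0 at every point with u ∈ I. -/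

import Mathlib

/-!
Extended phase space ℝ^{2N+2} with coordinates (u, q, p_u, p),
canonical Poisson bracket (sign convention {q^i, p_i} = -1) and
Hamiltonian vector field X_L F = {L, F}.
-/

noncomputable section

/-- The extended phase space: a point is `(u, q, p_u, p)`. -/
abbrev PS (N : ℕ) : Type := ℝ × (Fin N → ℝ) × ℝ × (Fin N → ℝ)

/-- Partial derivative with respect to `u`. -/
def pdu {N : ℕ} (F : PS N → ℝ) (x : PS N) : ℝ :=
  deriv (fun t => F (t, x.2.1, x.2.2.1, x.2.2.2)) x.1

/-- Partial derivative with respect to `p_u`. -/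
def pdpu {N : ℕ} (F : PS N → ℝ) (x : PS N) : ℝ :=
  deriv (fun t => F (x.1, x.2.1, t, x.2.2.2)) x.2.2.1

/-- Partial derivative with respect to `q^i`. -/
def pdq {N : ℕ} (i : Fin N) (F : PS N → ℝ) (x : PS N) : ℝ :=
  deriv (fun t => F (x.1, Function.update x.2.1 i t, x.2.2.1, x.2.2.2)) (x.2.1 i)

/-- Partial derivative with respect to `p_i`. -/
def pdp {N : ℕ} (i : Fin N) (F : PS N → ℝ) (x : PS N) : ℝ :=
  deriv (fun t => F (x.1, x.2.1, x.2.2.1, Function.update x.2.2.2 i t)) (x.2.2.2 i)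

/-- The canonical Poisson bracket on the extended phase space, with the sign
convention `{q^i, p_i} = -1` of the paper. -/
def pbracket {N : ℕ} (F H : PS N → ℝ) (x : PS N) : ℝ :=
  (pdpu F x * pdu H x - pdu F x * pdpu H x)
    + ∑ i : Fin N, (pdp i F x * pdq i H x - pdq i F x * pdp i H x)

/-- The Hamiltonian vector field of `L` applied to `F`: `X_L F = {L, F}`. -/
def XL {N : ℕ} (L : PS N → ℝ) (F : PS N → ℝ) : PS N → ℝ :=
  fun x => pbracket L F x

/-!
Formally, on solutions of `X_L² F = ρ F` the operator `X_L` acts as a square root `√ρ`, so `V`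
acts as multiplication by `v = (p_u + α γ √ρ)² + 2Ω / γ²`, where `α = 2s / r²`. The extended
Hamiltonian commutes with `L` (hence with `ρ`), and the Riccati equation gives
`{H, v} = 2 α γ' √ρ v`. So if `{H, F} = ν {L, F}` with a factor `ν` depending on `u` only, then
`{H, V F} = (ν + 2 α γ') {L, V F}`. The function `G_r` is such an `F`: it solves
`X_L² G_r = r² λ G_r`, because the recursion is the addition formula for `sin (r θ)`, and, being a
function of `(q, p)`, it has `ν = -k² γ'`. Since `k² = 2 s α`, the factor vanishes after `s`
applications of `V`.

Splitting `v = A + B √ρ` into its even and odd parts in `√ρ` makes this rigorous: `V F` equals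
`A F + B X_L F`, and no square root occurs.
-/

open Set
open scoped ContDiff Topology

variable {N : ℕ}

section PoissonBracket

/-- The Hamiltonian vector field of `F`, so that `{F, G} = dG (hamVec F)`. -/
def hamVec (F : PS N → ℝ) (x : PS N) : PS N :=
  (pdpu F x, fun i => pdp i F x, -pdu F x, fun i => -pdq i F x)

/-- The Poisson tensor as a map from covectors to vectors. -/
def sharp : (PS N →L[ℝ] ℝ) →L[ℝ] PS N :=
  (ContinuousLinearMap.apply ℝ ℝ (0, 0, 1, 0)).prod <|
    (ContinuousLinearMap.pi fun i => .apply ℝ ℝ (0, 0, 0, Pi.single i 1)).prod <|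
      (-ContinuousLinearMap.apply ℝ ℝ (1, 0, 0, 0)).prod
        (ContinuousLinearMap.pi fun i => -ContinuousLinearMap.apply ℝ ℝ (0, Pi.single i 1, 0, 0))

variable {F G : PS N → ℝ} {x : PS N}

theorem pdu_eq_fderiv (hF : DifferentiableAt ℝ F x) : pdu F x = fderiv ℝ F x (1, 0, 0, 0) :=
  (hF.hasFDerivAt.comp_hasDerivAt_of_eq x.1
    ((hasDerivAt_id _).prodMk (hasDerivAt_const _ x.2)) rfl).deriv

theorem pdpu_eq_fderiv (hF : DifferentiableAt ℝ F x) : pdpu F x = fderiv ℝ F x (0, 0, 1, 0) :=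
  (hF.hasFDerivAt.comp_hasDerivAt_of_eq x.2.2.1 ((hasDerivAt_const _ x.1).prodMk
    ((hasDerivAt_const _ x.2.1).prodMk
      ((hasDerivAt_id _).prodMk (hasDerivAt_const _ x.2.2.2)))) rfl).deriv

theorem pdq_eq_fderiv (i : Fin N) (hF : DifferentiableAt ℝ F x) :
    pdq i F x = fderiv ℝ F x (0, Pi.single i 1, 0, 0) :=
  (hF.hasFDerivAt.comp_hasDerivAt_of_eq (x.2.1 i) ((hasDerivAt_const _ x.1).prodMk
    ((hasDerivAt_update x.2.1 i _).prodMk (hasDerivAt_const _ x.2.2))) (by simp)).deriv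

theorem pdp_eq_fderiv (i : Fin N) (hF : DifferentiableAt ℝ F x) :
    pdp i F x = fderiv ℝ F x (0, 0, 0, Pi.single i 1) :=
  (hF.hasFDerivAt.comp_hasDerivAt_of_eq (x.2.2.2 i) ((hasDerivAt_const _ x.1).prodMk
    ((hasDerivAt_const _ x.2.1).prodMk
      ((hasDerivAt_const _ x.2.2.1).prodMk (hasDerivAt_update x.2.2.2 i _)))) (by simp)).deriv

theorem hamVec_eq_sharp (hF : DifferentiableAt ℝ F x) : hamVec F x = sharp (fderiv ℝ F x) := by
  simp only [hamVec, pdu_eq_fderiv hF, pdpu_eq_fderiv hF, pdq_eq_fderiv _ hF, pdp_eq_fderiv _ hF]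
  rfl

theorem phaseSpace_eq_sum (v : PS N) :
    v = v.1 • ((1, 0, 0, 0) : PS N) + v.2.2.1 • ((0, 0, 1, 0) : PS N)
      + ∑ i, (v.2.1 i • ((0, Pi.single i 1, 0, 0) : PS N)
        + v.2.2.2 i • ((0, 0, 0, Pi.single i 1) : PS N)) := by
  ext i <;> simp [Prod.fst_sum, Prod.snd_sum, Finset.sum_apply, Pi.single_apply]

theorem pbracket_eq_fderiv (F : PS N → ℝ) (hG : DifferentiableAt ℝ G x) :
    pbracket F G x = fderiv ℝ G x (hamVec F x) := by
  rw [phaseSpace_eq_sum (hamVec F x)]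
  simp only [map_add, map_sum, map_smul, ← pdu_eq_fderiv hG, ← pdpu_eq_fderiv hG,
    ← pdq_eq_fderiv _ hG, ← pdp_eq_fderiv _ hG, pbracket, hamVec, smul_eq_mul, neg_mul,
    ← sub_eq_add_neg]

theorem pbracket_swap (F G : PS N → ℝ) (x : PS N) : pbracket F G x = -pbracket G F x := by
  simp only [pbracket, neg_add, ← Finset.sum_neg_distrib]
  congr 1
  · ring
  · exact Finset.sum_congr rfl fun i _ => by ring

theorem pbracket_self (F : PS N → ℝ) (x : PS N) : pbracket F F x = 0 :=
  self_eq_neg.mp (pbracket_swap F F x)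

theorem apply_sharp_swap (φ ψ : PS N →L[ℝ] ℝ) : φ (sharp ψ) = -ψ (sharp φ) := by
  have h := pbracket_swap ψ φ 0
  rwa [pbracket_eq_fderiv ψ φ.differentiableAt, pbracket_eq_fderiv φ ψ.differentiableAt,
    hamVec_eq_sharp ψ.differentiableAt, hamVec_eq_sharp φ.differentiableAt, φ.fderiv,
    ψ.fderiv] at h

theorem pbracket_add (E : PS N → ℝ) (hF : DifferentiableAt ℝ F x) (hG : DifferentiableAt ℝ G x) :
    pbracket E (F + G) x = pbracket E F x + pbracket E G x := by
  rw [pbracket_eq_fderiv E (hF.add hG), fderiv_add hF hG, add_apply, ← pbracket_eq_fderiv E hF,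
    ← pbracket_eq_fderiv E hG]

theorem pbracket_mul (E : PS N → ℝ) (hF : DifferentiableAt ℝ F x) (hG : DifferentiableAt ℝ G x) :
    pbracket E (F * G) x = pbracket E F x * G x + F x * pbracket E G x := by
  rw [pbracket_eq_fderiv E (hF.mul hG), fderiv_mul hF hG, pbracket_eq_fderiv E hF,
    pbracket_eq_fderiv E hG]
  simp only [add_apply, smul_apply, smul_eq_mul]
  ring

theorem pbracket_const_smul (E : PS N → ℝ) (a : ℝ) (hF : DifferentiableAt ℝ F x) :
    pbracket E (a • F) x = a * pbracket E F x := by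
  rw [pbracket_eq_fderiv E (hF.const_smul a), fderiv_const_smul hF, smul_apply,
    pbracket_eq_fderiv E hF, smul_eq_mul]

theorem pbracket_congr (E : PS N → ℝ) (hF : DifferentiableAt ℝ F x) (h : F =ᶠ[𝓝 x] G) :
    pbracket E F x = pbracket E G x := by
  rw [pbracket_eq_fderiv E hF, pbracket_eq_fderiv E (h.differentiableAt_iff.mp hF), h.fderiv_eq]

theorem pbracket_comp_self {f : ℝ → ℝ} (hF : DifferentiableAt ℝ F x)
    (hf : DifferentiableAt ℝ f (F x)) : pbracket F (f ∘ F) x = 0 := by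
  have hfF := hf.hasDerivAt.comp_hasFDerivAt x hF.hasFDerivAt
  rw [pbracket_eq_fderiv F hfF.differentiableAt, hfF.fderiv, smul_apply, ← pbracket_eq_fderiv F hF,
    pbracket_self, smul_zero]

theorem pbracket_eq_fderiv_sharp (hF : DifferentiableAt ℝ F x) (hG : DifferentiableAt ℝ G x) :
    pbracket F G x = fderiv ℝ G x (sharp (fderiv ℝ F x)) := by
  rw [pbracket_eq_fderiv F hG, hamVec_eq_sharp hF]

theorem hasFDerivAt_pbracket (hF : ContDiffAt ℝ 2 F x) (hG : ContDiffAt ℝ 2 G x) :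
    HasFDerivAt (pbracket F G) ((fderiv ℝ (fderiv ℝ G) x).flip (hamVec F x)
      - (fderiv ℝ (fderiv ℝ F) x).flip (hamVec G x)) x := by
  have second {E : PS N → ℝ} (hE : ContDiffAt ℝ 2 E x) :
      HasFDerivAt (fderiv ℝ E) (fderiv ℝ (fderiv ℝ E) x) x :=
    ((hE.fderiv_right (m := 1) le_rfl).differentiableAt one_ne_zero).hasFDerivAt
  have first {E : PS N → ℝ} (hE : ContDiffAt ℝ 2 E x) : ∀ᶠ y in 𝓝 x, DifferentiableAt ℝ E y :=
    (hE.eventually (by simp)).mono fun y hy => hy.differentiableAt two_ne_zero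
  refine (((second hG).clm_apply (sharp.hasFDerivAt.comp x (second hF))).congr_fderiv ?_
    ).congr_of_eventuallyEq ?_
  · refine ContinuousLinearMap.ext fun v => ?_
    simp [hamVec_eq_sharp (first hF).self_of_nhds, hamVec_eq_sharp (first hG).self_of_nhds,
      apply_sharp_swap (fderiv ℝ G x), ← sub_eq_neg_add]
  · filter_upwards [first hF, first hG] with y hFy hGy using pbracket_eq_fderiv_sharp hFy hGy

theorem pbracket_pbracket {E : PS N → ℝ} (hE : ContDiffAt ℝ 2 E x) (hF : ContDiffAt ℝ 2 F x)
    (hG : ContDiffAt ℝ 2 G x) :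
    pbracket E (pbracket F G) x
      = pbracket (pbracket E F) G x + pbracket F (pbracket E G) x := by
  have expand {A B : PS N → ℝ} (C : PS N → ℝ) (hA : ContDiffAt ℝ 2 A x)
      (hB : ContDiffAt ℝ 2 B x) : pbracket C (pbracket A B) x
        = fderiv ℝ (fderiv ℝ B) x (hamVec C x) (hamVec A x)
          - fderiv ℝ (fderiv ℝ A) x (hamVec C x) (hamVec B x) := by
    have h := hasFDerivAt_pbracket hA hB
    simp [pbracket_eq_fderiv C h.differentiableAt, h.fderiv]
  have symm {A : PS N → ℝ} (hA : ContDiffAt ℝ 2 A x) : IsSymmSndFDerivAt ℝ A x :=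
    hA.isSymmSndFDerivAt (by simp)
  rw [pbracket_swap (pbracket E F) G, expand E hF hG, expand G hE hF, expand F hE hG,
    (symm hE).eq (hamVec G x), (symm hF).eq (hamVec G x), (symm hG).eq (hamVec F x)]
  ring

end PoissonBracket

section SquareEigenfunctions

variable {S : Set (PS N)} {F G H L : PS N → ℝ}

theorem contDiffAt_two_of_isOpen (hS : IsOpen S) (hF : ContDiffOn ℝ ∞ F S) {x : PS N}
    (hx : x ∈ S) : ContDiffAt ℝ 2 F x :=
  (hF.contDiffAt (hS.mem_nhds hx)).of_le (ENat.LEInfty.out)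

theorem differentiableAt_of_isOpen (hS : IsOpen S) (hF : ContDiffOn ℝ ∞ F S) {x : PS N}
    (hx : x ∈ S) : DifferentiableAt ℝ F x :=
  (contDiffAt_two_of_isOpen hS hF hx).differentiableAt two_ne_zero

theorem contDiffOn_pbracket (hS : IsOpen S) (hF : ContDiffOn ℝ ∞ F S) (hG : ContDiffOn ℝ ∞ G S) :
    ContDiffOn ℝ ∞ (pbracket F G) S :=
  ((hG.fderiv_of_isOpen hS le_rfl).clm_apply
    (sharp.contDiff.comp_contDiffOn (hF.fderiv_of_isOpen hS le_rfl))).congr fun _ hx =>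
      pbracket_eq_fderiv_sharp (differentiableAt_of_isOpen hS hF hx)
        (differentiableAt_of_isOpen hS hG hx)

theorem eqOn_pbracket_congr (E : PS N → ℝ) (hS : IsOpen S) (hF : ContDiffOn ℝ ∞ F S)
    (h : EqOn F G S) : EqOn (pbracket E F) (pbracket E G) S := fun _ hx =>
  pbracket_congr E (differentiableAt_of_isOpen hS hF hx) (h.eventuallyEq_of_mem (hS.mem_nhds hx))

theorem eqOn_pbracket_zero (E : PS N → ℝ) (hS : IsOpen S) (hF : ContDiffOn ℝ ∞ F S)
    (h : EqOn F 0 S) : EqOn (pbracket E F) 0 S := fun x hx => by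
  have hzero := pbracket_const_smul E 0 (differentiableAt_of_isOpen hS hF hx)
  rw [zero_smul, zero_mul] at hzero
  rw [eqOn_pbracket_congr E hS hF h hx, hzero, Pi.zero_apply]

theorem eqOn_pbracket_comm (hS : IsOpen S) (hH : ContDiffOn ℝ ∞ H S) (hL : ContDiffOn ℝ ∞ L S)
    (hF : ContDiffOn ℝ ∞ F S) (hHL : EqOn (pbracket H L) 0 S) :
    EqOn (pbracket H (pbracket L F)) (pbracket L (pbracket H F)) S := fun x hx => by
  rw [pbracket_pbracket (contDiffAt_two_of_isOpen hS hH hx) (contDiffAt_two_of_isOpen hS hL hx)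
    (contDiffAt_two_of_isOpen hS hF hx), pbracket_swap (pbracket H L),
    eqOn_pbracket_zero F hS (contDiffOn_pbracket hS hH hL) hHL hx, Pi.zero_apply, neg_zero,
    zero_add]

/-- `F` is smooth on `S` and solves `X_L² F = ρ F` there. -/
structure IsSqEigenOn (S : Set (PS N)) (L ρ F : PS N → ℝ) : Prop where
  contDiffOn : ContDiffOn ℝ ∞ F S
  eqOn : EqOn (pbracket L (pbracket L F)) (ρ * F) S

namespace IsSqEigenOn

variable {A B ρ μ ν : PS N → ℝ}

theorem pbracket_angle_add (hS : IsOpen S) (hL : ContDiffOn ℝ ∞ L S) {a b : ℝ} (ha : a ≠ 0)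
    (hb : b ≠ 0) (hF : IsSqEigenOn S L (a ^ 2 • ρ) F) (hG : IsSqEigenOn S L (b ^ 2 • ρ) G) :
    EqOn (pbracket L (a⁻¹ • (pbracket L F * G) + b⁻¹ • (F * pbracket L G)))
      ((a + b) • (ρ * (F * G) + (a * b)⁻¹ • (pbracket L F * pbracket L G))) S := fun x hx => by
  have dF := differentiableAt_of_isOpen hS hF.contDiffOn hx
  have dG := differentiableAt_of_isOpen hS hG.contDiffOn hx
  have dF' := differentiableAt_of_isOpen hS (contDiffOn_pbracket hS hL hF.contDiffOn) hx
  have dG' := differentiableAt_of_isOpen hS (contDiffOn_pbracket hS hL hG.contDiffOn) hx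
  rw [pbracket_add L ((dF'.mul dG).const_smul _) ((dF.mul dG').const_smul _),
    pbracket_const_smul L _ (dF'.mul dG), pbracket_const_smul L _ (dF.mul dG'),
    pbracket_mul L dF' dG, pbracket_mul L dF dG', hF.eqOn hx, hG.eqOn hx]
  simp only [Pi.mul_apply, Pi.add_apply, Pi.smul_apply, smul_eq_mul]
  field_simp
  ring

-- For constant `ρ = -ω²` this is `sin ((a + b) ω t) = sin (a ω t) cos (b ω t) + …`.
theorem angle_add (hS : IsOpen S) (hL : ContDiffOn ℝ ∞ L S) (hρ : ContDiffOn ℝ ∞ ρ S)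
    (hLρ : EqOn (pbracket L ρ) 0 S) {a b : ℝ} (ha : a ≠ 0) (hb : b ≠ 0)
    (hF : IsSqEigenOn S L (a ^ 2 • ρ) F) (hG : IsSqEigenOn S L (b ^ 2 • ρ) G) :
    IsSqEigenOn S L ((a + b) ^ 2 • ρ) (a⁻¹ • (pbracket L F * G) + b⁻¹ • (F * pbracket L G)) := by
  have hF' := contDiffOn_pbracket hS hL hF.contDiffOn
  have hG' := contDiffOn_pbracket hS hL hG.contDiffOn
  have hK : ContDiffOn ℝ ∞ (a⁻¹ • (pbracket L F * G) + b⁻¹ • (F * pbracket L G)) S :=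
    ((hF'.mul hG.contDiffOn).const_smul a⁻¹).add ((hF.contDiffOn.mul hG').const_smul b⁻¹)
  refine ⟨hK, fun x hx => ?_⟩
  have dF := differentiableAt_of_isOpen hS hF.contDiffOn hx
  have dG := differentiableAt_of_isOpen hS hG.contDiffOn hx
  have dF' := differentiableAt_of_isOpen hS hF' hx
  have dG' := differentiableAt_of_isOpen hS hG' hx
  have dρ := differentiableAt_of_isOpen hS hρ hx
  rw [eqOn_pbracket_congr L hS (contDiffOn_pbracket hS hL hK)
      (pbracket_angle_add hS hL ha hb hF hG) hx,
    pbracket_const_smul L _ ((dρ.mul (dF.mul dG)).add ((dF'.mul dG').const_smul _)),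
    pbracket_add L (dρ.mul (dF.mul dG)) ((dF'.mul dG').const_smul _),
    pbracket_const_smul L _ (dF'.mul dG'), pbracket_mul L dρ (dF.mul dG), pbracket_mul L dF dG,
    pbracket_mul L dF' dG', hF.eqOn hx, hG.eqOn hx, hLρ hx]
  simp only [Pi.mul_apply, Pi.add_apply, Pi.smul_apply, smul_eq_mul, Pi.zero_apply]
  field_simp
  ring

theorem pbracket_mul_add (hS : IsOpen S) (hL : ContDiffOn ℝ ∞ L S) (hF : IsSqEigenOn S L ρ F)
    (hA : ContDiffOn ℝ ∞ A S) (hB : ContDiffOn ℝ ∞ B S) (hLA : EqOn (pbracket L A) 0 S)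
    (hLB : EqOn (pbracket L B) 0 S) :
    EqOn (pbracket L (A * F + B * pbracket L F)) (ρ * B * F + A * pbracket L F) S := fun x hx => by
  have dF := differentiableAt_of_isOpen hS hF.contDiffOn hx
  have dF' := differentiableAt_of_isOpen hS (contDiffOn_pbracket hS hL hF.contDiffOn) hx
  have dA := differentiableAt_of_isOpen hS hA hx
  have dB := differentiableAt_of_isOpen hS hB hx
  rw [pbracket_add L (dA.mul dF) (dB.mul dF'), pbracket_mul L dA dF, pbracket_mul L dB dF',
    hLA hx, hLB hx, hF.eqOn hx]
  simp only [Pi.mul_apply, Pi.add_apply, Pi.zero_apply]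
  ring

theorem mul_add (hS : IsOpen S) (hL : ContDiffOn ℝ ∞ L S) (hρ : ContDiffOn ℝ ∞ ρ S)
    (hLρ : EqOn (pbracket L ρ) 0 S) (hF : IsSqEigenOn S L ρ F)
    (hA : ContDiffOn ℝ ∞ A S) (hB : ContDiffOn ℝ ∞ B S) (hLA : EqOn (pbracket L A) 0 S)
    (hLB : EqOn (pbracket L B) 0 S) :
    IsSqEigenOn S L ρ (A * F + B * pbracket L F) := by
  have hK : ContDiffOn ℝ ∞ (A * F + B * pbracket L F) S :=
    (hA.mul hF.contDiffOn).add (hB.mul (contDiffOn_pbracket hS hL hF.contDiffOn))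
  have hρB : ContDiffOn ℝ ∞ (ρ * B) S := hρ.mul hB
  have hLρB : EqOn (pbracket L (ρ * B)) 0 S := fun x hx => by
    rw [pbracket_mul L (differentiableAt_of_isOpen hS hρ hx) (differentiableAt_of_isOpen hS hB hx),
      hLρ hx, hLB hx]
    simp only [Pi.zero_apply, zero_mul, mul_zero, add_zero]
  refine ⟨hK, fun x hx => ?_⟩
  rw [eqOn_pbracket_congr L hS (contDiffOn_pbracket hS hL hK)
      (hF.pbracket_mul_add hS hL hA hB hLA hLB) hx,
    hF.pbracket_mul_add hS hL hρB hA hLρB hLA hx]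
  simp only [Pi.mul_apply, Pi.add_apply]
  ring

theorem congr (hS : IsOpen S) (hL : ContDiffOn ℝ ∞ L S) (hF : IsSqEigenOn S L ρ F)
    (h : EqOn G F S) : IsSqEigenOn S L ρ G := by
  have hG : ContDiffOn ℝ ∞ G S := hF.contDiffOn.congr h
  refine ⟨hG, fun x hx => ?_⟩
  rw [eqOn_pbracket_congr L hS (contDiffOn_pbracket hS hL hG) (eqOn_pbracket_congr L hS hG h) hx,
    hF.eqOn hx, Pi.mul_apply, Pi.mul_apply, h hx]

end IsSqEigenOn

/-- Formally, the symbol `A + B √ρ` is invariant under `X_L` and is an eigenfunction of `X_H` with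
eigenvalue `μ √ρ`, where `μ` is `X_L`-invariant and `H` commutes with `L`. The last two fields are
the parts of the eigenvalue equation that are even and odd in `√ρ`. -/
structure IsRaising (S : Set (PS N)) (H L ρ μ A B : PS N → ℝ) : Prop where
  contDiffOn_left : ContDiffOn ℝ ∞ A S
  contDiffOn_right : ContDiffOn ℝ ∞ B S
  contDiffOn_rate : ContDiffOn ℝ ∞ μ S
  pbracket_left : EqOn (pbracket L A) 0 S
  pbracket_right : EqOn (pbracket L B) 0 S
  pbracket_rate : EqOn (pbracket L μ) 0 S
  ham_comm : EqOn (pbracket H L) 0 S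
  ham_left : EqOn (pbracket H A) (μ * ρ * B) S
  ham_right : EqOn (pbracket H B) (μ * A) S

namespace IsRaising

variable {A B ρ μ ν : PS N → ℝ}

theorem pbracket_mul_add (hR : IsRaising S H L ρ μ A B) (hS : IsOpen S)
    (hH : ContDiffOn ℝ ∞ H S) (hL : ContDiffOn ℝ ∞ L S) (hF : IsSqEigenOn S L ρ F)
    (hν : ContDiffOn ℝ ∞ ν S) (hLν : EqOn (pbracket L ν) 0 S)
    (hHF : EqOn (pbracket H F) (ν * pbracket L F) S) :
    EqOn (pbracket H (A * F + B * pbracket L F))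
      ((ν + μ) * pbracket L (A * F + B * pbracket L F)) S := fun x hx => by
  have dF := differentiableAt_of_isOpen hS hF.contDiffOn hx
  have dF' := differentiableAt_of_isOpen hS (contDiffOn_pbracket hS hL hF.contDiffOn) hx
  have dA := differentiableAt_of_isOpen hS hR.contDiffOn_left hx
  have dB := differentiableAt_of_isOpen hS hR.contDiffOn_right hx
  have hHF' : pbracket H (pbracket L F) x = ν x * (ρ x * F x) := by
    rw [eqOn_pbracket_comm hS hH hL hF.contDiffOn hR.ham_comm hx,
      eqOn_pbracket_congr L hS (contDiffOn_pbracket hS hH hF.contDiffOn) hHF hx,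
      pbracket_mul L (differentiableAt_of_isOpen hS hν hx) dF', hLν hx, hF.eqOn hx, Pi.zero_apply,
      zero_mul, zero_add, Pi.mul_apply]
  rw [Pi.mul_apply, hF.pbracket_mul_add hS hL hR.contDiffOn_left hR.contDiffOn_right
      hR.pbracket_left hR.pbracket_right hx,
    pbracket_add H (dA.mul dF) (dB.mul dF'), pbracket_mul H dA dF, pbracket_mul H dB dF', hHF',
    hR.ham_left hx, hR.ham_right hx, hHF hx]
  simp only [Pi.mul_apply, Pi.add_apply]
  ring

theorem iterate (hR : IsRaising S H L ρ μ A B) (hS : IsOpen S) (hH : ContDiffOn ℝ ∞ H S)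
    (hL : ContDiffOn ℝ ∞ L S) (hρ : ContDiffOn ℝ ∞ ρ S) (hLρ : EqOn (pbracket L ρ) 0 S)
    {V : (PS N → ℝ) → PS N → ℝ}
    (hV : ∀ F, IsSqEigenOn S L ρ F → EqOn (V F) (A * F + B * pbracket L F) S)
    (hF : IsSqEigenOn S L ρ F) {t : ℝ} (hHF : EqOn (pbracket H F) (t • μ * pbracket L F) S)
    (j : ℕ) : IsSqEigenOn S L ρ (V^[j] F) ∧
      EqOn (pbracket H (V^[j] F)) ((t + j) • μ * pbracket L (V^[j] F)) S := by
  induction j with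
  | zero => simpa using And.intro hF hHF
  | succ j ih =>
    obtain ⟨hK, hHK⟩ := ih
    have hVK := hK.mul_add hS hL hρ hLρ hR.contDiffOn_left hR.contDiffOn_right hR.pbracket_left
      hR.pbracket_right
    have hVF := hVK.congr hS hL (hV _ hK)
    have hμ : ContDiffOn ℝ ∞ ((t + j) • μ) S := hR.contDiffOn_rate.const_smul (t + j)
    have hLμ : EqOn (pbracket L ((t + j) • μ)) 0 S := fun x hx => by
      rw [pbracket_const_smul L _ (differentiableAt_of_isOpen hS hR.contDiffOn_rate hx),
        hR.pbracket_rate hx, Pi.zero_apply, mul_zero]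
    rw [Function.iterate_succ_apply']
    refine ⟨hVF, fun x hx => ?_⟩
    rw [eqOn_pbracket_congr H hS hVF.contDiffOn (hV _ hK) hx,
      hR.pbracket_mul_add hS hH hL hK hμ hLμ hHK hx, Pi.mul_apply,
      Pi.mul_apply, eqOn_pbracket_congr L hS hVF.contDiffOn (hV _ hK) hx]
    simp only [Pi.add_apply, Pi.smul_apply, smul_eq_mul]
    push_cast
    ring

end IsRaising

variable {Gs : ℕ → PS N → ℝ}

theorem isSqEigenOn_seq {ρ : PS N → ℝ} (hS : IsOpen S) (hL : ContDiffOn ℝ ∞ L S)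
    (hρ : ContDiffOn ℝ ∞ ρ S) (hLρ : EqOn (pbracket L ρ) 0 S) (hone : IsSqEigenOn S L ρ (Gs 1))
    (hsucc : ∀ j : ℕ, 1 ≤ j → Gs (j + 1) =
      fun x => XL L (Gs 1) x * Gs j x + (1 / (j : ℝ)) * Gs 1 x * XL L (Gs j) x)
    {j : ℕ} (hj : 1 ≤ j) : IsSqEigenOn S L ((j : ℝ) ^ 2 • ρ) (Gs j) := by
  induction j, hj using Nat.le_induction with
  | base => simpa using hone
  | succ j hj ih =>
    have hadd := IsSqEigenOn.angle_add (a := 1) hS hL hρ hLρ one_ne_zero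
      (Nat.cast_ne_zero.mpr (Nat.one_le_iff_ne_zero.mp hj)) (by simpa using hone) ih
    rw [Nat.cast_add_one, add_comm]
    refine hadd.congr hS hL fun x _ => ?_
    simp only [hsucc j hj, XL, Pi.add_apply, Pi.smul_apply, Pi.mul_apply, smul_eq_mul]
    ring

end SquareEigenfunctions

section ConfigurationFunctions

/-- The coordinate `u` as a continuous linear form. -/
def posCLM : PS N →L[ℝ] ℝ := .fst ℝ ℝ _

/-- The coordinate `p_u` as a continuous linear form. -/
def momCLM : PS N →L[ℝ] ℝ := .fst ℝ ℝ _ ∘L .snd ℝ (Fin N → ℝ) _ ∘L .snd ℝ ℝ _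

@[simp]
theorem posCLM_apply (x : PS N) : posCLM x = x.1 := rfl

@[simp]
theorem momCLM_apply (x : PS N) : momCLM x = x.2.2.1 := rfl

/-- `F` is a function of `(q, p)` only. -/
def IsBasic (F : PS N → ℝ) : Prop :=
  ∀ (u u' pu pu' : ℝ) (q p : Fin N → ℝ), F (u, q, pu, p) = F (u', q, pu', p)

namespace IsBasic

variable {F G L : PS N → ℝ}

theorem pdu_eq_zero (hF : IsBasic F) (x : PS N) : pdu F x = 0 := by
  rw [pdu, funext fun t => hF t x.1 x.2.2.1 x.2.2.1 x.2.1 x.2.2.2, deriv_const]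

theorem pdpu_eq_zero (hF : IsBasic F) (x : PS N) : pdpu F x = 0 := by
  rw [pdpu, funext fun t => hF x.1 x.1 t x.2.2.1 x.2.1 x.2.2.2, deriv_const]

protected theorem pbracket (hF : IsBasic F) (hG : IsBasic G) : IsBasic (pbracket F G) := by
  intro u u' pu pu' q p
  simp only [pbracket, hF.pdu_eq_zero, hF.pdpu_eq_zero, pdq, pdp, hF u u' pu pu',
    hG u u' pu pu', zero_mul]

theorem seq {Gs : ℕ → PS N → ℝ} (hL : IsBasic L) (hone : IsBasic (Gs 1))
    (hsucc : ∀ j : ℕ, 1 ≤ j → Gs (j + 1) =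
      fun x => XL L (Gs 1) x * Gs j x + (1 / (j : ℝ)) * Gs 1 x * XL L (Gs j) x)
    {j : ℕ} (hj : 1 ≤ j) : IsBasic (Gs j) := by
  induction j, hj using Nat.le_induction with
  | base => exact hone
  | succ j hj ih =>
    intro u u' pu pu' q p
    simp only [hsucc j hj, XL, hL.pbracket hone u u' pu pu', hL.pbracket ih u u' pu pu',
      hone u u' pu pu', ih u u' pu pu']

theorem pbracket_comp_fst (hL : IsBasic L) {f : ℝ → ℝ} {x : PS N}
    (hf : DifferentiableAt ℝ f x.1) : pbracket L (fun y => f y.1) x = 0 := by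
  have hfx : HasFDerivAt (fun y : PS N => f y.1) _ x :=
    hf.hasDerivAt.comp_hasFDerivAt x posCLM.hasFDerivAt
  rw [pbracket_eq_fderiv (G := fun y => f y.1) L hfx.differentiableAt, hfx.fderiv]
  simp [hamVec, hL.pdpu_eq_zero]

end IsBasic

end ConfigurationFunctions

section ExtendedHamiltonian

/-- The paper's operator `U_{2s,r}`, with the constant `2s/r²` replaced by `α`. -/
def shiftOp (α : ℝ) (γ : ℝ → ℝ) (L F : PS N → ℝ) (x : PS N) : ℝ :=
  x.2.2.1 * F x + α * γ x.1 * XL L F x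

/-- The paper's operator `V`, whose iterates on the `G_r` are the characteristic first integrals,
with the constant `2s/r²` replaced by `α`. -/
def charOp (α Ω : ℝ) (γ : ℝ → ℝ) (L F : PS N → ℝ) (x : PS N) : ℝ :=
  shiftOp α γ L (shiftOp α γ L F) x + 2 * Ω * (γ x.1 ^ 2)⁻¹ * F x

/-- The extended Hamiltonian `½ p_u² - k² γ' L + k² c₀ γ² + Ω / γ²`. -/
def extHam (k c₀ Ω : ℝ) (γ : ℝ → ℝ) (L : PS N → ℝ) (x : PS N) : ℝ :=
  1 / 2 * x.2.2.1 ^ 2 - k ^ 2 * deriv γ x.1 * L x + k ^ 2 * c₀ * γ x.1 ^ 2 + Ω / γ x.1 ^ 2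

/-- The function `λ = -2 (c L + c₀)` of the equation `X_L² G = λ G`. -/
def extEigenvalue (c c₀ : ℝ) (L : PS N → ℝ) (x : PS N) : ℝ :=
  -2 * (c * L x + c₀)

/-- On solutions of `X_L² F = r² λ F`, where `λ = extEigenvalue c c₀ L`, the operator `charOp` is
`F ↦ A F + B X_L F`; this is the coefficient `A`. -/
def charCoeffLeft (α Ω r c c₀ : ℝ) (γ : ℝ → ℝ) (L : PS N → ℝ) (x : PS N) : ℝ :=
  x.2.2.1 ^ 2 + α ^ 2 * γ x.1 ^ 2 * (r ^ 2 * extEigenvalue c c₀ L x) + 2 * Ω * (γ x.1 ^ 2)⁻¹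

/-- The coefficient `B` in `charOp = A + B X_L`, see `charCoeffLeft`. -/
def charCoeffRight (α : ℝ) (γ : ℝ → ℝ) (x : PS N) : ℝ :=
  2 * α * γ x.1 * x.2.2.1

/-- `γ` is a smooth nonvanishing solution of `γ' + c γ² + C = 0` on `I`. -/
structure IsRiccatiSolution (c C : ℝ) (I : Set ℝ) (γ : ℝ → ℝ) : Prop where
  contDiffOn : ContDiffOn ℝ ∞ γ I
  ne_zero : ∀ u ∈ I, γ u ≠ 0
  deriv_add : ∀ u ∈ I, deriv γ u + c * γ u ^ 2 + C = 0

variable {c c₀ C α k r Ω : ℝ} {I : Set ℝ} {γ : ℝ → ℝ} {F L W : PS N → ℝ} {x : PS N}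

theorem contDiff_extEigenvalue (hL : ContDiff ℝ ∞ L) : ContDiff ℝ ∞ (extEigenvalue c c₀ L) := by
  unfold extEigenvalue
  fun_prop

theorem pbracket_smul_extEigenvalue (hL : DifferentiableAt ℝ L x) (a : ℝ) :
    pbracket L (a • extEigenvalue c c₀ L) x = 0 :=
  pbracket_comp_self (f := fun t => a * (-2 * (c * t + c₀))) hL (by fun_prop)

theorem pbracket_of_hasFDerivAt {a b e : ℝ} (E : PS N → ℝ) (hL : DifferentiableAt ℝ L x)
    (hW : HasFDerivAt W (a • posCLM + b • momCLM + e • fderiv ℝ L x) x) :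
    pbracket E W x = a * pdpu E x - b * pdu E x + e * pbracket E L x := by
  rw [pbracket_eq_fderiv E hW.differentiableAt, hW.fderiv, pbracket_eq_fderiv E hL]
  simp [hamVec, ← sub_eq_add_neg]

theorem pdu_of_hasFDerivAt {a b e : ℝ} (hL : DifferentiableAt ℝ L x) (hLb : IsBasic L)
    (hW : HasFDerivAt W (a • posCLM + b • momCLM + e • fderiv ℝ L x) x) : pdu W x = a := by
  rw [pdu_eq_fderiv hW.differentiableAt, hW.fderiv]
  simp [← pdu_eq_fderiv hL, hLb.pdu_eq_zero]

theorem pdpu_of_hasFDerivAt {a b e : ℝ} (hL : DifferentiableAt ℝ L x) (hLb : IsBasic L)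
    (hW : HasFDerivAt W (a • posCLM + b • momCLM + e • fderiv ℝ L x) x) : pdpu W x = b := by
  rw [pdpu_eq_fderiv hW.differentiableAt, hW.fderiv]
  simp [← pdpu_eq_fderiv hL, hLb.pdpu_eq_zero]

namespace IsRiccatiSolution

variable (hγ : IsRiccatiSolution c C I γ)

include hγ

theorem contDiffOn_comp_fst : ContDiffOn ℝ ∞ (fun y : PS N => γ y.1) (Prod.fst ⁻¹' I) :=
  hγ.contDiffOn.comp contDiff_fst.contDiffOn fun _ h => h

theorem contDiffOn_inv_sq :
    ContDiffOn ℝ ∞ (fun y : PS N => (γ y.1 ^ 2)⁻¹) (Prod.fst ⁻¹' I) :=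
  (hγ.contDiffOn_comp_fst.pow 2).inv fun y hy => pow_ne_zero 2 (hγ.ne_zero y.1 hy)

theorem contDiffOn_charCoeffLeft (hL : ContDiff ℝ ∞ L) :
    ContDiffOn ℝ ∞ (charCoeffLeft α Ω r c c₀ γ L) (Prod.fst ⁻¹' I) := by
  have hmom : ContDiff ℝ ∞ (fun y : PS N => y.2.2.1 ^ 2) := by fun_prop
  have hρ : ContDiff ℝ ∞ (r ^ 2 • extEigenvalue c c₀ L) :=
    (contDiff_extEigenvalue hL).const_smul (r ^ 2)
  exact (hmom.contDiffOn.add ((contDiffOn_const.mul (hγ.contDiffOn_comp_fst.pow 2)).mul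
    hρ.contDiffOn)).add (contDiffOn_const.mul hγ.contDiffOn_inv_sq)

theorem contDiffOn_charCoeffRight :
    ContDiffOn ℝ ∞ (charCoeffRight (N := N) α γ) (Prod.fst ⁻¹' I) :=
  (contDiffOn_const.mul hγ.contDiffOn_comp_fst).mul momCLM.contDiff.contDiffOn

variable (hI : IsOpen I)

include hI

theorem hasDerivAt {u : ℝ} (hu : u ∈ I) : HasDerivAt γ (deriv γ u) u :=
  ((hγ.contDiffOn.differentiableOn (by simp)).differentiableAt (hI.mem_nhds hu)).hasDerivAt

theorem hasDerivAt_deriv {u : ℝ} (hu : u ∈ I) :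
    HasDerivAt (deriv γ) (-2 * c * γ u * deriv γ u) u := by
  refine (((((hγ.hasDerivAt hI hu).pow 2).const_mul (-c)).sub_const C).congr_deriv
    (by ring)).congr_of_eventuallyEq (Filter.mem_of_superset (hI.mem_nhds hu) fun v hv => ?_)
  change deriv γ v = -c * γ v ^ 2 - C
  linarith [hγ.deriv_add v hv]

theorem hasFDerivAt_comp_fst (hx : x.1 ∈ I) :
    HasFDerivAt (fun y : PS N => γ y.1) (deriv γ x.1 • posCLM) x :=
  (hγ.hasDerivAt hI hx).comp_hasFDerivAt x posCLM.hasFDerivAt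

theorem hasFDerivAt_charCoeffRight (hx : x.1 ∈ I) :
    HasFDerivAt (charCoeffRight (N := N) α γ) ((2 * α * deriv γ x.1 * x.2.2.1) • posCLM
      + (2 * α * γ x.1) • momCLM + (0 : ℝ) • fderiv ℝ L x) x := by
  refine (((hγ.hasFDerivAt_comp_fst hI hx).const_mul (2 * α)).mul
    momCLM.hasFDerivAt).congr_fderiv (ContinuousLinearMap.ext fun v => ?_)
  simp only [momCLM_apply, posCLM_apply, add_apply, smul_apply, smul_eq_mul, zero_smul, add_zero]
  ring

theorem hasFDerivAt_inv_sq (hx : x.1 ∈ I) :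
    HasFDerivAt (fun y : PS N => (γ y.1 ^ 2)⁻¹)
      ((-2 * deriv γ x.1 / γ x.1 ^ 3) • posCLM) x := by
  have hne := hγ.ne_zero _ hx
  refine (((hγ.hasDerivAt hI hx).pow 2).inv (pow_ne_zero 2 hne)).congr_deriv ?_
    |>.comp_hasFDerivAt x posCLM.hasFDerivAt
  simp only [Pi.pow_apply, Nat.add_one_sub_one, pow_one, Nat.cast_ofNat]
  field_simp

theorem hasFDerivAt_charCoeffLeft (hL : DifferentiableAt ℝ L x) (hx : x.1 ∈ I) :
    HasFDerivAt (charCoeffLeft α Ω r c c₀ γ L)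
      ((2 * α ^ 2 * γ x.1 * deriv γ x.1 * (r ^ 2 * extEigenvalue c c₀ L x)
          - 4 * Ω * deriv γ x.1 / γ x.1 ^ 3) • posCLM
        + (2 * x.2.2.1) • momCLM
        + (-2 * c * α ^ 2 * r ^ 2 * γ x.1 ^ 2) • fderiv ℝ L x) x := by
  have hsq := ((hγ.hasFDerivAt_comp_fst hI hx).pow 2).const_mul (α ^ 2)
  have hρ := (((hL.hasFDerivAt.const_mul c).add_const c₀).const_mul (-2)).const_mul (r ^ 2)
  refine (((momCLM.hasFDerivAt.pow 2).add (hsq.mul hρ)).add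
    ((hγ.hasFDerivAt_inv_sq hI hx).const_mul (2 * Ω))).congr_fderiv
      (ContinuousLinearMap.ext fun v => ?_)
  simp only [extEigenvalue, momCLM_apply, posCLM_apply, Nat.add_one_sub_one, pow_one, nsmul_eq_mul,
    Nat.cast_ofNat, neg_smul, smul_neg, neg_mul, mul_neg, add_apply, smul_apply, smul_eq_mul,
    neg_apply]
  ring

theorem hasFDerivAt_extHam (hL : DifferentiableAt ℝ L x) (hx : x.1 ∈ I) :
    HasFDerivAt (extHam k c₀ Ω γ L)
      ((deriv γ x.1 * (2 * k ^ 2 * γ x.1 * (c * L x + c₀) - 2 * Ω / γ x.1 ^ 3)) • posCLM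
        + x.2.2.1 • momCLM + (-k ^ 2 * deriv γ x.1) • fderiv ℝ L x) x := by
  have hγ' : HasFDerivAt (fun y : PS N => deriv γ y.1) _ x :=
    (hγ.hasDerivAt_deriv hI hx).comp_hasFDerivAt x posCLM.hasFDerivAt
  have hkin : HasFDerivAt (fun y : PS N => 1 / 2 * y.2.2.1 ^ 2) _ x :=
    (momCLM.hasFDerivAt.pow 2).const_mul (1 / 2)
  refine (((hkin.sub ((hγ'.const_mul (k ^ 2)).mul hL.hasFDerivAt)).add
    (((hγ.hasFDerivAt_comp_fst hI hx).pow 2).const_mul (k ^ 2 * c₀))).add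
      ((hγ.hasFDerivAt_inv_sq hI hx).const_mul Ω)).congr_fderiv
        (ContinuousLinearMap.ext fun v => ?_)
  simp only [one_div, momCLM_apply, posCLM_apply, Nat.add_one_sub_one, pow_one, nsmul_eq_mul,
    Nat.cast_ofNat, neg_mul, neg_smul, smul_neg, add_apply, sub_apply, smul_apply, smul_eq_mul,
    neg_apply]
  ring

theorem contDiffOn_deriv_comp_fst :
    ContDiffOn ℝ ∞ (fun y : PS N => deriv γ y.1) (Prod.fst ⁻¹' I) :=
  ((contDiffOn_infty_iff_deriv_of_isOpen hI).mp hγ.contDiffOn).2.comp contDiff_fst.contDiffOn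
    fun _ h => h

theorem contDiffOn_extHam (hL : ContDiff ℝ ∞ L) :
    ContDiffOn ℝ ∞ (extHam k c₀ Ω γ L) (Prod.fst ⁻¹' I) := by
  have hkin : ContDiff ℝ ∞ (fun y : PS N => 1 / 2 * y.2.2.1 ^ 2) := by fun_prop
  exact ((hkin.contDiffOn.sub ((contDiffOn_const.mul (hγ.contDiffOn_deriv_comp_fst hI)).mul
    hL.contDiffOn)).add (contDiffOn_const.mul (hγ.contDiffOn_comp_fst.pow 2))).add
      (contDiffOn_const.mul hγ.contDiffOn_inv_sq)

theorem pbracket_extHam_of_isBasic (hL : DifferentiableAt ℝ L x) (hx : x.1 ∈ I)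
    (hF : IsBasic F) :
    pbracket (extHam k c₀ Ω γ L) F x = -(k ^ 2) * deriv γ x.1 * pbracket L F x := by
  rw [pbracket_swap, pbracket_of_hasFDerivAt F hL (hγ.hasFDerivAt_extHam hI hL hx),
    hF.pdu_eq_zero, hF.pdpu_eq_zero, pbracket_swap F L]
  ring

theorem pbracket_charCoeffLeft (hL : DifferentiableAt ℝ L x) (hLb : IsBasic L) (hx : x.1 ∈ I) :
    pbracket L (charCoeffLeft α Ω r c c₀ γ L) x = 0 := by
  rw [pbracket_of_hasFDerivAt L hL (hγ.hasFDerivAt_charCoeffLeft hI hL hx), hLb.pdu_eq_zero,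
    hLb.pdpu_eq_zero, pbracket_self, mul_zero, mul_zero, mul_zero, sub_zero, add_zero]

theorem pbracket_charCoeffRight (hL : DifferentiableAt ℝ L x) (hLb : IsBasic L) (hx : x.1 ∈ I) :
    pbracket L (charCoeffRight α γ) x = 0 := by
  rw [pbracket_of_hasFDerivAt L hL (hγ.hasFDerivAt_charCoeffRight hI hx), hLb.pdu_eq_zero,
    hLb.pdpu_eq_zero, mul_zero, mul_zero, zero_mul, sub_zero, add_zero]

theorem pbracket_extHam_charCoeffLeft (hL : DifferentiableAt ℝ L x) (hLb : IsBasic L)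
    (hx : x.1 ∈ I) :
    pbracket (extHam (α * r) c₀ Ω γ L) (charCoeffLeft α Ω r c c₀ γ L) x
      = 2 * α * deriv γ x.1 * (r ^ 2 * extEigenvalue c c₀ L x) * charCoeffRight α γ x := by
  have hH := hγ.hasFDerivAt_extHam (k := α * r) (c₀ := c₀) (Ω := Ω) hI hL hx
  rw [pbracket_of_hasFDerivAt _ hL (hγ.hasFDerivAt_charCoeffLeft hI hL hx),
    pdu_of_hasFDerivAt hL hLb hH, pdpu_of_hasFDerivAt hL hLb hH,
    hγ.pbracket_extHam_of_isBasic hI hL hx hLb, pbracket_self, charCoeffRight, extEigenvalue]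
  ring

theorem pbracket_extHam_charCoeffRight (hL : DifferentiableAt ℝ L x) (hLb : IsBasic L)
    (hx : x.1 ∈ I) :
    pbracket (extHam (α * r) c₀ Ω γ L) (charCoeffRight α γ) x
      = 2 * α * deriv γ x.1 * charCoeffLeft α Ω r c c₀ γ L x := by
  have hH := hγ.hasFDerivAt_extHam (k := α * r) (c₀ := c₀) (Ω := Ω) hI hL hx
  have hne := hγ.ne_zero _ hx
  rw [pbracket_of_hasFDerivAt _ hL (hγ.hasFDerivAt_charCoeffRight hI hx),
    pdu_of_hasFDerivAt hL hLb hH, pdpu_of_hasFDerivAt hL hLb hH, charCoeffLeft, extEigenvalue]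
  field_simp
  ring

theorem isRaising (hL : ContDiff ℝ ∞ L) (hLb : IsBasic L) :
    IsRaising (Prod.fst ⁻¹' I) (extHam (α * r) c₀ Ω γ L) L
      (r ^ 2 • extEigenvalue c c₀ L) (fun y => 2 * α * deriv γ y.1)
      (charCoeffLeft α Ω r c c₀ γ L) (charCoeffRight α γ) :=
  have dL : Differentiable ℝ L := hL.differentiable (by simp)
  { contDiffOn_left := hγ.contDiffOn_charCoeffLeft hL
    contDiffOn_right := hγ.contDiffOn_charCoeffRight
    contDiffOn_rate := contDiffOn_const.mul (hγ.contDiffOn_deriv_comp_fst hI)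
    pbracket_left := fun x hx => hγ.pbracket_charCoeffLeft hI (dL x) hLb hx
    pbracket_right := fun x hx => hγ.pbracket_charCoeffRight hI (dL x) hLb hx
    pbracket_rate := fun _ hx =>
      hLb.pbracket_comp_fst ((hγ.hasDerivAt_deriv hI hx).const_mul (2 * α)).differentiableAt
    ham_comm := fun x hx => by
      rw [hγ.pbracket_extHam_of_isBasic hI (dL x) hx hLb, pbracket_self, mul_zero, Pi.zero_apply]
    ham_left := fun x hx => hγ.pbracket_extHam_charCoeffLeft hI (dL x) hLb hx
    ham_right := fun x hx => hγ.pbracket_extHam_charCoeffRight hI (dL x) hLb hx }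

theorem charOp_eqOn (hL : ContDiff ℝ ∞ L) (hLb : IsBasic L)
    (hF : IsSqEigenOn (Prod.fst ⁻¹' I) L (r ^ 2 • extEigenvalue c c₀ L) F) :
    EqOn (charOp α Ω γ L F)
      (charCoeffLeft α Ω r c c₀ γ L * F + charCoeffRight α γ * pbracket L F)
      (Prod.fst ⁻¹' I) := fun x hx => by
  have hLmom : EqOn (pbracket L momCLM) 0 (Prod.fst ⁻¹' I) := fun y _ => by
    rw [pbracket_eq_fderiv L momCLM.differentiableAt, momCLM.fderiv]
    simp [hamVec, hLb.pdu_eq_zero]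
  have hLγ : EqOn (pbracket L fun y => α * γ y.1) 0 (Prod.fst ⁻¹' I) := fun y hy =>
    hLb.pbracket_comp_fst (f := fun u => α * γ u)
      ((hγ.hasDerivAt hI hy).const_mul α).differentiableAt
  have hXshift : XL L (shiftOp α γ L F) x = _ := hF.pbracket_mul_add (hI.preimage continuous_fst)
    hL.contDiffOn momCLM.contDiff.contDiffOn (contDiffOn_const.mul hγ.contDiffOn_comp_fst) hLmom
    hLγ hx
  rw [charOp, shiftOp, hXshift]
  simp only [shiftOp, XL, charCoeffLeft, charCoeffRight, extEigenvalue, momCLM_apply, Pi.add_apply,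
    Pi.mul_apply, Pi.smul_apply, smul_eq_mul]
  ring

end IsRiccatiSolution

end ExtendedHamiltonian

theorem extended_hamiltonian_first_integral_Omega_general {s n : ℕ} (hn : 0 < n)
    {c c₀ C Ω : ℝ} {L : PS N → ℝ} (hL : ContDiff ℝ ∞ L) (hLb : IsBasic L) {I : Set ℝ}
    (hI : IsOpen I) {γ : ℝ → ℝ} (hγ : IsRiccatiSolution c C I γ) {Gs : ℕ → PS N → ℝ}
    (hG : ContDiff ℝ ∞ (Gs 1)) (hGb : IsBasic (Gs 1))
    (hext : ∀ x, XL L (XL L (Gs 1)) x = -2 * (c * L x + c₀) * Gs 1 x)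
    (hsucc : ∀ j : ℕ, 1 ≤ j → Gs (j + 1) =
      fun x => XL L (Gs 1) x * Gs j x + (1 / (j : ℝ)) * Gs 1 x * XL L (Gs j) x)
    {x : PS N} (hx : x.1 ∈ I) :
    pbracket (extHam (2 * s / n) c₀ Ω γ L) ((charOp (2 * s / n ^ 2) Ω γ L)^[s] (Gs n)) x = 0 := by
  set S : Set (PS N) := Prod.fst ⁻¹' I
  have hS : IsOpen S := hI.preimage continuous_fst
  have hn₀ : (n : ℝ) ≠ 0 := Nat.cast_ne_zero.mpr hn.ne'
  set α : ℝ := 2 * s / n ^ 2 with hα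
  have hk : (2 * s / n : ℝ) = α * n := by rw [hα]; field_simp
  rw [hk]
  have dL : Differentiable ℝ L := hL.differentiable (by simp)
  have hρ := contDiff_extEigenvalue (c := c) (c₀ := c₀) hL
  have hnρ : ContDiff ℝ ∞ ((n : ℝ) ^ 2 • extEigenvalue c c₀ L) := hρ.const_smul ((n : ℝ) ^ 2)
  have hLρ : EqOn (pbracket L (extEigenvalue c c₀ L)) 0 S := fun y _ => by
    simpa using pbracket_smul_extEigenvalue (c := c) (c₀ := c₀) (dL y) 1
  have hGn : IsSqEigenOn S L ((n : ℝ) ^ 2 • extEigenvalue c c₀ L) (Gs n) :=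
    isSqEigenOn_seq hS hL.contDiffOn hρ.contDiffOn hLρ ⟨hG.contDiffOn, fun y _ => hext y⟩ hsucc hn
  have hHGn : EqOn (pbracket (extHam (α * n) c₀ Ω γ L) (Gs n))
      ((-s : ℝ) • (fun y => 2 * α * deriv γ y.1) * pbracket L (Gs n)) S := fun y hy => by
    rw [hγ.pbracket_extHam_of_isBasic hI (dL y) hy (hLb.seq hGb hsucc hn), hα]
    simp only [Pi.mul_apply, Pi.smul_apply, smul_eq_mul]
    field_simp
  have hHV := ((hγ.isRaising hI hL hLb).iterate hS (hγ.contDiffOn_extHam hI hL) hL.contDiffOn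
    hnρ.contDiffOn (fun y _ => pbracket_smul_extEigenvalue (dL y) _)
    (fun _ => hγ.charOp_eqOn hI hL hLb) hGn hHGn s).2 hx
  rwa [neg_add_cancel, zero_smul, zero_mul] at hHV

/-- For an extension `H = ½p_u² - k²γ'L + k²c₀γ² + Ω/γ²` of a
Hamiltonian `L` admitting a solution `G` of `X_L²G = -2(cL+c₀)G`, the characteristic
functions `K̄_{2s,r} = (U_{2s,r}² + 2Ωγ⁻²)^s (G_r)` give first integrals:
`K̄_{m,n}` when `m = 2s` is even, and `K̄_{2m,2n}` when `m` is odd. -/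
theorem extended_hamiltonian_first_integral_Omega
    (N : ℕ) (hN : 1 ≤ N) (m n : ℕ) (hm : 0 < m) (hn : 0 < n)
    (c c₀ C Ω : ℝ) (L G : PS N → ℝ)
    (hLsmooth : ContDiff ℝ (⊤ : ℕ∞) L) (hGsmooth : ContDiff ℝ (⊤ : ℕ∞) G)
    (hLqp : ∀ (u u' pu pu' : ℝ) (q p : Fin N → ℝ),
      L (u, q, pu, p) = L (u', q, pu', p))
    (hGqp : ∀ (u u' pu pu' : ℝ) (q p : Fin N → ℝ),
      G (u, q, pu, p) = G (u', q, pu', p))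
    (hext : ∀ x : PS N, XL L (XL L G) x = -2 * (c * L x + c₀) * G x)
    (I : Set ℝ) (hIopen : IsOpen I) (hIconn : I.OrdConnected) (hInonempty : I.Nonempty)
    (γ : ℝ → ℝ) (hγ : ContDiff ℝ (⊤ : ℕ∞) γ) (hγne : ∀ u ∈ I, γ u ≠ 0)
    (hode : ∀ u ∈ I, deriv γ u + c * γ u ^ 2 + C = 0)
    (Gs : ℕ → PS N → ℝ) (hGs1 : Gs 1 = G)
    (hGsrec : ∀ j : ℕ, 1 ≤ j → Gs (j + 1) =
      fun x => XL L G x * Gs j x + (1 / (j : ℝ)) * G x * XL L (Gs j) x)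
    (U : ℕ → ℕ → (PS N → ℝ) → PS N → ℝ)
    (hU : ∀ (a b : ℕ) (h : PS N → ℝ) (x : PS N),
      U a b h x = x.2.2.1 * h x + ((a : ℝ) / (b : ℝ) ^ 2) * γ x.1 * XL L h x)
    (V : ℕ → ℕ → (PS N → ℝ) → PS N → ℝ)
    (hV : ∀ (a b : ℕ) (h : PS N → ℝ) (x : PS N),
      V a b h x = U a b (U a b h) x + 2 * Ω * ((γ x.1) ^ 2)⁻¹ * h x)
    (H : PS N → ℝ)
    (hH : ∀ x : PS N, H x = (1 / 2) * x.2.2.1 ^ 2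
      - ((m : ℝ) / (n : ℝ)) ^ 2 * deriv γ x.1 * L x
      + ((m : ℝ) / (n : ℝ)) ^ 2 * c₀ * γ x.1 ^ 2 + Ω / γ x.1 ^ 2) :
    (∀ s : ℕ, m = 2 * s →
      ∀ x : PS N, x.1 ∈ I → pbracket H ((V m n)^[s] (Gs n)) x = 0) ∧
    (Odd m →
      ∀ x : PS N, x.1 ∈ I → pbracket H ((V (2 * m) (2 * n))^[m] (Gs (2 * n))) x = 0) := by
  have hVop (a b : ℕ) : V a b = charOp ((a : ℝ) / (b : ℝ) ^ 2) Ω γ L := by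
    have hUop : U a b = shiftOp ((a : ℝ) / (b : ℝ) ^ 2) γ L := funext fun h => funext (hU a b h)
    exact funext fun h => funext fun x => by rw [hV, hUop, charOp]
  have hHext : H = extHam ((m : ℝ) / n) c₀ Ω γ L := funext hH
  subst hGs1
  have hriccati : IsRiccatiSolution c C I γ := ⟨hγ.contDiffOn, hγne, hode⟩
  rw [hHext]
  refine ⟨fun s hms x hx => ?_, fun _ x hx => ?_⟩
  · rw [hVop, hms]
    exact_mod_cast extended_hamiltonian_first_integral_Omega_general (s := s) hn hLsmooth hLqp
      hIopen hriccati hGsmooth hGqp hext hGsrec hx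
  · have hk : (m : ℝ) / n = 2 * m / (2 * n : ℕ) := by
      rw [Nat.cast_mul, Nat.cast_two, mul_div_mul_left _ _ two_ne_zero]
    rw [hVop, hk]
    exact_mod_cast extended_hamiltonian_first_integral_Omega_general (s := m)
      (mul_pos two_pos hn) hLsmooth hLqp hIopen hriccati hGsmooth hGqp hext hGsrec hx
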